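/- Over the alphabet {0,1}, let α = (0^n 1)_{n=1}^∞ be the concatenation 01 001 0001 ⋯ of the words 0^n 1 for n = 1, 2, 3, …, and let β = (0^n 1 1)_{n=1}^∞ be the concatenation of the words 0^n 1 1 for n = 1, 2, 3, …. Then α ≤_mqi β and β ≤_mqi α (so β ≡_mqi α), but β is not 1qi-reducible to α. -/

import Mathlib

/-- An infinite string over an alphabet `Γ` is a function `ℕ → Γ`, with positions
indexed from 1.  `IsQI C α β f` says that `f : ℕ → ℕ` is a `C`-quasi-isometry from
the string `α` to the string `β`: `C ≥ 1`, `f` maps positions (`≥ 1`) to positions,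
`f` is color-preserving (`β (f x) = α x`), condition (a) holds (`f 1 ≤ C` and
`|f (x+1) − f x| ≤ C`), and condition (b) holds (`x + C < y → f x < f y`). -/
def IsQI {Γ : Type*} (C : ℕ) (α β : ℕ → Γ) (f : ℕ → ℕ) : Prop :=
  1 ≤ C ∧
  (∀ x, 1 ≤ x → 1 ≤ f x) ∧
  (∀ x, 1 ≤ x → β (f x) = α x) ∧
  f 1 ≤ C ∧
  (∀ x, 1 ≤ x → |((f (x + 1) : ℤ)) - (f x : ℤ)| ≤ (C : ℤ)) ∧
  (∀ x y, 1 ≤ x → x + C < y → f x < f y)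

/-- Quasi-isometric reducibility `α ≤_qi β`: some `C`-quasi-isometry from `α` to `β`
exists. -/
def QIred {Γ : Type*} (α β : ℕ → Γ) : Prop := ∃ C f, IsQI C α β f

/-- Many-one quasi-isometric reducibility `α ≤_mqi β`: some computable
`C`-quasi-isometry from `α` to `β` exists. -/
def MQIred {Γ : Type*} (α β : ℕ → Γ) : Prop :=
  ∃ C f, IsQI C α β f ∧ Computable f

/-- One-one quasi-isometric reducibility `α ≤_1qi β`: some computable
`C`-quasi-isometry from `α` to `β` exists which is injective on positions. -/
def OQIred {Γ : Type*} (α β : ℕ → Γ) : Prop :=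
  ∃ C f, IsQI C α β f ∧ Computable f ∧
    (∀ x y, 1 ≤ x → 1 ≤ y → f x = f y → x = y)

/-- Permutation quasi-isometric reducibility `α ≤_pqi β`: some computable
`C`-quasi-isometry from `α` to `β` exists which is a bijection on positions. -/
def PQIred {Γ : Type*} (α β : ℕ → Γ) : Prop :=
  ∃ C f, IsQI C α β f ∧ Computable f ∧
    (∀ x y, 1 ≤ x → 1 ≤ y → f x = f y → x = y) ∧
    (∀ y, 1 ≤ y → ∃ x, 1 ≤ x ∧ f x = y)

/-- `α ≡_mqi β`. -/
def MQIequiv {Γ : Type*} (α β : ℕ → Γ) : Prop := MQIred α β ∧ MQIred β α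

/-- `α ≡_1qi β`. -/
def OQIequiv {Γ : Type*} (α β : ℕ → Γ) : Prop := OQIred α β ∧ OQIred β α

/-- `α ≡_pqi β`. -/
def PQIequiv {Γ : Type*} (α β : ℕ → Γ) : Prop := PQIred α β ∧ PQIred β α

open Classical in
/-- The string `α = (0^n 1)_{n=1}^∞ = 01 001 0001 ⋯` over `{0,1}`: since the word
`0^n 1` ends at position `n(n+3)/2`, position `p` carries `1` iff `2p = n(n+3)` for
some `n ≥ 1`. -/
noncomputable def strZeroesOne : ℕ → Fin 2 := fun p =>
  if ∃ n : ℕ, 1 ≤ n ∧ 2 * p = n * (n + 3) then 1 else 0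

open Classical in
/-- The string `β = (0^n 1 1)_{n=1}^∞ = 011 0011 00011 ⋯` over `{0,1}`: since the
word `0^n 1 1` ends at position `n(n+5)/2`, position `p` carries `1` iff
`2p = n(n+5)` or `2(p+1) = n(n+5)` for some `n ≥ 1`. -/
noncomputable def strZeroesOneOne : ℕ → Fin 2 := fun p =>
  if ∃ n : ℕ, 1 ≤ n ∧ (2 * p = n * (n + 5) ∨ 2 * (p + 1) = n * (n + 5)) then 1 else 0

/-!
Both strings belong to the family `(0^n 1^k)_{n=1}^∞`. For `j ≥ 1`, sending the `n`-th word
`0^n 1^k` to the `n`-th word `0^n 1^j`, by skipping or merging ones, is an mqi-reduction.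
Conversely, an injective quasi-isometry sends the `k` ones of a word to `k` distinct ones at bounded
distance from each other. If `j < k`, two of these lie in different words `0^n 1^j`, which bounds
the length of those words, so infinitely many positions would be sent into a finite set.
-/

namespace IsQI

variable {Γ : Type*} {α β : ℕ → Γ} {C : ℕ} {f : ℕ → ℕ}

theorem of_monotoneOn (hC : 1 ≤ C) (hpos : ∀ x, 1 ≤ x → 1 ≤ f x)
    (hcolor : ∀ x, 1 ≤ x → β (f x) = α x) (hone : f 1 ≤ C) (hmono : MonotoneOn f (Set.Ici 1))
    (hstep : ∀ x, 1 ≤ x → f (x + 1) ≤ f x + C) (hlt : ∀ x, 1 ≤ x → f x < f (x + C + 1)) :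
    IsQI C α β f := by
  refine ⟨hC, hpos, hcolor, hone, fun x hx => ?_, fun x y hx hxy => ?_⟩
  · have hle : f x ≤ f (x + 1) := hmono hx (Set.mem_Ici.2 (by omega)) (by omega)
    have := hstep x hx
    rw [abs_le]
    omega
  · exact (hlt x hx).trans_le (hmono (Set.mem_Ici.2 (by omega)) (Set.mem_Ici.2 (by omega)) hxy)

theorem abs_apply_add_sub_le (hf : IsQI C α β f) {x : ℕ} (hx : 1 ≤ x) (i : ℕ) :
    |(f (x + i) : ℤ) - f x| ≤ i * C := by
  obtain ⟨-, -, -, -, hstep, -⟩ := hf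
  induction i with
  | zero => simp
  | succ i ih =>
    calc |(f (x + (i + 1)) : ℤ) - f x|
        ≤ |(f (x + i + 1) : ℤ) - f (x + i)| + |(f (x + i) : ℤ) - f x| := abs_sub_le _ _ _
      _ ≤ C + i * C := add_le_add (hstep (x + i) (by omega)) ih
      _ = (i + 1 : ℕ) * C := by push_cast; ring

end IsQI

/-- The positions `p` of the string `β` for which at least `k` positions within distance `D` of `p`
carry the letter `c`. -/
def crowdedPositions {Γ : Type*} (β : ℕ → Γ) (c : Γ) (k D : ℕ) : Set ℕ :=
  {p | ∃ s : Finset ℕ, s.card = k ∧ ∀ q ∈ s, β q = c ∧ |(q : ℤ) - p| ≤ D}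

theorem IsQI.not_injOn_of_finite_crowdedPositions {Γ : Type*} {α β : ℕ → Γ} {C k : ℕ} {c : Γ}
    {f : ℕ → ℕ} (hf : IsQI C α β f) (hruns : {x | 1 ≤ x ∧ ∀ i < k, α (x + i) = c}.Infinite)
    (hfin : (crowdedPositions β c k (k * C)).Finite) : ¬ Set.InjOn f (Set.Ici 1) := by
  intro hinj
  refine Set.infinite_of_injOn_mapsTo (hinj.mono fun x hx => hx.1) ?_ hruns hfin
  rintro x ⟨hx, hrun⟩
  refine ⟨(Finset.range k).image fun i => f (x + i), ?_, ?_⟩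
  · rw [Finset.card_image_of_injective _ fun i i' h => ?_, Finset.card_range]
    have := hinj (Set.mem_Ici.2 (by omega)) (Set.mem_Ici.2 (by omega)) h
    omega
  · simp only [Finset.mem_image, Finset.mem_range, forall_exists_index, and_imp]
    rintro _ i hi rfl
    refine ⟨(hf.2.2.1 _ (by omega)).trans (hrun i hi), (hf.abs_apply_add_sub_le hx i).trans ?_⟩
    push_cast
    gcongr

/-- The position at which the word `0^n 1^k` ends in the string `(0^n 1^k)_{n=1}^∞`. -/
def wordEnd (k n : ℕ) : ℕ := n * (n + 2 * k + 1) / 2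

theorem wordEnd_succ (k n : ℕ) : wordEnd k (n + 1) = wordEnd k n + (n + 1 + k) := by
  unfold wordEnd
  rw [← Nat.add_mul_div_left _ _ two_pos]
  congr 1
  ring

theorem two_mul_wordEnd (k n : ℕ) : 2 * wordEnd k n = n * (n + 2 * k + 1) := by
  induction n with
  | zero => simp [wordEnd]
  | succ n ih => rw [wordEnd_succ, mul_add, ih]; ring

theorem wordEnd_strictMono (k : ℕ) : StrictMono (wordEnd k) :=
  strictMono_nat_of_lt_succ fun n => by rw [wordEnd_succ]; omega

theorem wordEnd_add_le {k m n : ℕ} (h : m < n) : wordEnd k m + (n + k) ≤ wordEnd k n := by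
  obtain ⟨n, rfl⟩ := Nat.exists_eq_add_one_of_ne_zero h.ne_bot
  rw [wordEnd_succ]
  exact Nat.add_le_add_right ((wordEnd_strictMono k).monotone (Nat.le_of_lt_succ h)) _

theorem primrec_wordEnd (k : ℕ) : Primrec (wordEnd k) :=
  Primrec.nat_div.comp
    (Primrec.nat_mul.comp .id (Primrec.succ.comp (Primrec.nat_add.comp .id (.const (2 * k)))))
    (.const 2)

open Classical in
/-- The string `(0^n 1^k)_{n=1}^∞`: a position carries `1` iff it is followed by fewer than `k`
letters of its word. -/
noncomputable def zeroesOnes (k : ℕ) : ℕ → Fin 2 := fun p =>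
  if ∃ n : ℕ, 1 ≤ n ∧ ∃ r < k, p + r = wordEnd k n then 1 else 0

theorem zeroesOnes_eq_one_iff {k p : ℕ} :
    zeroesOnes k p = 1 ↔ ∃ n : ℕ, 1 ≤ n ∧ ∃ r < k, p + r = wordEnd k n := by
  simp [zeroesOnes]

theorem zeroesOnes_one : zeroesOnes 1 = strZeroesOne := by
  have hend (p n : ℕ) : p = wordEnd 1 n ↔ 2 * p = n * (n + 3) := by
    rw [← Nat.mul_right_inj two_ne_zero, two_mul_wordEnd]
  funext p
  unfold zeroesOnes strZeroesOne
  congr 1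
  simp only [Nat.lt_one_iff, exists_eq_left, add_zero, hend]

theorem zeroesOnes_two : zeroesOnes 2 = strZeroesOneOne := by
  have hend (p n : ℕ) : p = wordEnd 2 n ↔ 2 * p = n * (n + 5) := by
    rw [← Nat.mul_right_inj two_ne_zero, two_mul_wordEnd]
  have hlt (q : ℕ → Prop) : (∃ r < 2, q r) ↔ q 0 ∨ q 1 := by
    simp [Nat.le_one_iff_eq_zero_or_eq_one]
  funext p
  unfold zeroesOnes strZeroesOneOne
  congr 1
  simp only [hlt, add_zero, hend]

/-- In the string `(0^n 1^k)_{n=1}^∞`, the position `p` lies in the word `0^n 1^k` and is followed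
there by exactly `r` letters. -/
structure InWord (k n r p : ℕ) : Prop where
  one_le : 1 ≤ n
  lt : r < n + k
  add_eq : p + r = wordEnd k n

/-- The passage from a position to the next one in `(0^n 1^k)_{n=1}^∞`, on pairs made of the index
`n` of the word and the number of letters that follow in it. -/
def scanStep (k : ℕ) (s : ℕ × ℕ) : ℕ × ℕ :=
  if s.2 = 0 then (s.1 + 1, s.1 + k) else (s.1, s.2 - 1)

/-- The pair `(n, r)` with `InWord k n r p`, computed by reading the string letter by letter from
the fictitious position `0`. -/
def scan (k p : ℕ) : ℕ × ℕ := (scanStep k)^[p] (0, 0)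

theorem primrec_scan (k : ℕ) : Primrec (scan k) := by
  have hstep : Primrec (scanStep k) :=
    Primrec.ite (Primrec.eq.comp .snd (.const 0))
      ((Primrec.succ.comp .fst).pair (Primrec.nat_add.comp .fst (.const k)))
      (Primrec.fst.pair (Primrec.pred.comp .snd))
  exact Primrec.nat_iterate .id (.const (0, 0)) (hstep.comp .snd).to₂

namespace InWord

variable {k n n' r r' p : ℕ}

theorem succ_of_zero (h : InWord k n 0 p) : InWord k (n + 1) (n + k) (p + 1) where
  one_le := by omega
  lt := by omega
  add_eq := by
    have := h.add_eq
    rw [wordEnd_succ]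
    omega

theorem succ (h : InWord k n (r + 1) p) : InWord k n r (p + 1) where
  one_le := h.one_le
  lt := by have := h.lt; omega
  add_eq := by have := h.add_eq; omega

theorem last (h : InWord k n r p) : InWord k n 0 (p + r) where
  one_le := h.one_le
  lt := by have := h.one_le; omega
  add_eq := h.add_eq

theorem le_of_inWord (h : InWord k n r p) (h' : InWord k n' r' p) : n ≤ n' := by
  by_contra! hlt
  have := wordEnd_add_le (k := k) hlt
  have := h.lt
  have := h.add_eq
  have := h'.add_eq
  omega

theorem unique (h : InWord k n r p) (h' : InWord k n' r' p) : n = n' ∧ r = r' := by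
  obtain rfl : n = n' := (h.le_of_inWord h').antisymm (h'.le_of_inWord h)
  exact ⟨rfl, Nat.add_left_cancel (h.add_eq.trans h'.add_eq.symm)⟩

theorem zeroesOnes_eq (h : InWord k n r p) : zeroesOnes k p = if r < k then 1 else 0 := by
  have hiff : (∃ n, 1 ≤ n ∧ ∃ r < k, p + r = wordEnd k n) ↔ r < k := by
    constructor
    · rintro ⟨m, hm, s, hs, hadd⟩
      rwa [(h.unique ⟨hm, by omega, hadd⟩).2]
    · exact fun hr => ⟨n, h.one_le, r, hr, h.add_eq⟩
  simp only [zeroesOnes, hiff]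

end InWord

theorem inWord_scan (k : ℕ) {p : ℕ} (hp : 1 ≤ p) : InWord k (scan k p).1 (scan k p).2 p := by
  induction p, hp using Nat.le_induction with
  | base => exact ⟨le_rfl, by simp [scan, scanStep], by simp [scan, scanStep, wordEnd]; omega⟩
  | succ p _ ih =>
    rw [scan, Function.iterate_succ_apply', ← scan]
    generalize scan k p = s at ih ⊢
    obtain ⟨n, _ | r⟩ := s
    · exact ih.succ_of_zero
    · exact ih.succ

/-- The map from positions of `(0^n 1^k)_{n=1}^∞` to positions of `(0^n 1^j)_{n=1}^∞` that sends
each word to the word with the same number of zeroes, aligning the zeroes. If `k < j`, the last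
`j - k` ones are skipped; if `j < k`, the last `k - j + 1` ones are merged (the subtraction from
`r + j` is truncated). -/
def reword (k j p : ℕ) : ℕ := wordEnd j (scan k p).1 - ((scan k p).2 + j - k)

theorem primrec_reword (k j : ℕ) : Primrec (reword k j) := by
  have hscan := primrec_scan k
  exact Primrec.nat_sub.comp ((primrec_wordEnd j).comp (Primrec.fst.comp hscan))
    (Primrec.nat_sub.comp (Primrec.nat_add.comp (Primrec.snd.comp hscan) (.const j)) (.const k))

section reword

variable {j k n r p : ℕ}

theorem InWord.map_reword (h : InWord k n r p) (j : ℕ) : InWord j n (r + j - k) (reword k j p) := by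
  have hr := h.lt
  have hn := h.one_le
  have hle : n + j ≤ wordEnd j n := le_of_add_le_right (wordEnd_add_le hn)
  have hp : 1 ≤ p := by
    have := wordEnd_add_le (k := k) hn
    have := h.add_eq
    omega
  obtain ⟨hfst, hsnd⟩ := (inWord_scan k hp).unique h
  refine ⟨hn, by omega, ?_⟩
  rw [reword, hfst, hsnd]
  omega

theorem reword_step (j k : ℕ) (hp : 1 ≤ p) :
    reword k j p ≤ reword k j (p + 1) ∧ reword k j (p + 1) ≤ reword k j p + (j + k + 1) := by
  have h := inWord_scan k hp
  generalize (scan k p).1 = n, (scan k p).2 = r at h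
  have hword := (h.map_reword j).add_eq
  obtain _ | r := r
  · have hsucc := (h.succ_of_zero.map_reword j).add_eq
    rw [wordEnd_succ] at hsucc
    omega
  · have hsucc := (h.succ.map_reword j).add_eq
    omega

theorem reword_monotoneOn (k j : ℕ) : MonotoneOn (reword k j) (Set.Ici 1) :=
  monotoneOn_of_le_add_one Set.ordConnected_Ici fun _ _ hp _ => (reword_step j k hp).1

theorem reword_lt_reword_add (j k : ℕ) (hp : 1 ≤ p) :
    reword k j p < reword k j (p + (j + k + 1) + 1) := by
  have h := inWord_scan k hp
  generalize (scan k p).1 = n, (scan k p).2 = r at h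
  have hword := (h.map_reword j).add_eq
  suffices ∃ q, 1 ≤ q ∧ q ≤ p + (j + k + 1) + 1 ∧ reword k j p < reword k j q by
    obtain ⟨q, hq, hle, hlt⟩ := this
    exact hlt.trans_le (reword_monotoneOn k j hq (Set.mem_Ici.2 (by omega)) hle)
  obtain hrk | hkr := le_or_gt r k
  · have hnext := (h.last.succ_of_zero.map_reword j).add_eq
    rw [wordEnd_succ] at hnext
    exact ⟨p + r + 1, by omega, by omega, by omega⟩
  · obtain ⟨r, rfl⟩ := Nat.exists_eq_add_one_of_ne_zero hkr.ne_bot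
    have hnext := (h.succ.map_reword j).add_eq
    exact ⟨p + 1, by omega, by omega, by omega⟩

theorem zeroesOnes_reword (hj : 1 ≤ j) (k : ℕ) (hp : 1 ≤ p) :
    zeroesOnes j (reword k j p) = zeroesOnes k p := by
  have h := inWord_scan k hp
  have hones : (scan k p).2 + j - k < j ↔ (scan k p).2 < k := by omega
  rw [h.zeroesOnes_eq, (h.map_reword j).zeroesOnes_eq]
  simp only [hones]

end reword

theorem isQI_reword {j : ℕ} (hj : 1 ≤ j) (k : ℕ) :
    IsQI (j + k + 1) (zeroesOnes k) (zeroesOnes j) (reword k j) := by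
  refine .of_monotoneOn (by omega) (fun p hp => ?_) (fun p hp => zeroesOnes_reword hj k hp) ?_
    (reword_monotoneOn k j) (fun p hp => (reword_step j k hp).2)
    (fun p hp => reword_lt_reword_add j k hp)
  · have h := (inWord_scan k hp).map_reword j
    have := wordEnd_add_le (k := j) h.one_le
    have := h.lt
    have := h.add_eq
    omega
  · simp [reword, scan, scanStep, wordEnd]
    omega

theorem mqiRed_zeroesOnes {j : ℕ} (hj : 1 ≤ j) (k : ℕ) :
    MQIred (zeroesOnes k) (zeroesOnes j) :=
  ⟨_, _, isQI_reword hj k, (primrec_reword k j).to_comp⟩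

theorem infinite_runs_zeroesOnes (k : ℕ) :
    {x | 1 ≤ x ∧ ∀ i < k, zeroesOnes k (x + i) = 1}.Infinite := by
  have hinj : Function.Injective fun n => wordEnd k n + n + 2 :=
    (((wordEnd_strictMono k).add strictMono_id).add_const 2).injective
  refine Set.infinite_of_injective_forall_mem hinj fun n => ⟨by omega, fun i hi => ?_⟩
  refine zeroesOnes_eq_one_iff.2 ⟨n + 1, by omega, k - 1 - i, by omega, ?_⟩
  rw [wordEnd_succ]
  omega

theorem le_wordEnd_of_add_eq {j m n r p q D : ℕ} (hp : p + r = wordEnd j m)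
    (hq : q + r = wordEnd j n) (hne : p ≠ q) (hD : |(p : ℤ) - q| ≤ D) : p ≤ wordEnd j D := by
  rw [abs_le] at hD
  have hm : m ≤ D := by
    rcases lt_trichotomy m n with hlt | rfl | hlt
    · have := wordEnd_add_le (k := j) hlt
      omega
    · omega
    · have := wordEnd_add_le (k := j) hlt
      omega
  have := (wordEnd_strictMono j).monotone hm
  omega

theorem finite_crowdedPositions_zeroesOnes {j k : ℕ} (hjk : j < k) (D : ℕ) :
    (crowdedPositions (zeroesOnes j) 1 k D).Finite := by
  refine (Set.finite_Iic (wordEnd j (2 * D) + D)).subset ?_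
  rintro p ⟨s, rfl, hs⟩
  choose! n _ r hr hadd using fun q hq => zeroesOnes_eq_one_iff.1 (hs q hq).1
  -- Ones followed by the same number of letters of their words must lie in different words.
  obtain ⟨q, hq, q', hq', hne, hrr⟩ : ∃ q ∈ s, ∃ q' ∈ s, q ≠ q' ∧ r q = r q' :=
    Finset.exists_ne_map_eq_of_card_lt_of_maps_to (t := Finset.range j) (by simpa)
      fun q hq => by simpa using hr q hq
  have hp := abs_le.1 (hs q hq).2
  have hp' := abs_le.1 (hs q' hq').2
  have hle : q ≤ wordEnd j (2 * D) :=
    le_wordEnd_of_add_eq (hadd q hq) (hrr ▸ hadd q' hq') hne (by rw [abs_le]; omega)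
  rw [Set.mem_Iic]
  omega

theorem mqi_equiv_but_not_oqi_general {j k : ℕ} (hj : 1 ≤ j) (hjk : j < k) :
    MQIequiv (zeroesOnes j) (zeroesOnes k) ∧
      ∀ C f, IsQI C (zeroesOnes k) (zeroesOnes j) f → ¬ Set.InjOn f (Set.Ici 1) :=
  ⟨⟨mqiRed_zeroesOnes (hj.trans hjk.le) j, mqiRed_zeroesOnes hj k⟩, fun _ _ hf =>
    hf.not_injOn_of_finite_crowdedPositions (infinite_runs_zeroesOnes k)
      (finite_crowdedPositions_zeroesOnes hjk _)⟩

/-- With `α = (0^n 1)_{n=1}^∞` and `β = (0^n 1 1)_{n=1}^∞`, we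
have `α ≤_mqi β` and `β ≤_mqi α` (so `β ≡_mqi α`), but `β` is not 1qi-reducible
to `α`. -/
theorem mqi_equiv_but_not_oqi :
    MQIred strZeroesOne strZeroesOneOne ∧ MQIred strZeroesOneOne strZeroesOne ∧
      ¬ OQIred strZeroesOneOne strZeroesOne := by
  rw [← zeroesOnes_one, ← zeroesOnes_two]
  obtain ⟨⟨hle, hge⟩, hnot⟩ := mqi_equiv_but_not_oqi_general le_rfl one_lt_two
  exact ⟨hle, hge, fun ⟨C, f, hf, _, hinj⟩ => hnot C f hf fun x hx y hy => hinj x y hx hy⟩
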